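/- For any real s > 0, define q_r(s) = 4√2 · ∫₀ʳ cos(su)·(cosh r − cosh u)^{1/2} du. Then with rₙ = π(2n + 1/2)/s for n ∈ ℕ, we have q_{rₙ}(s) ≥ 4√2 · (cosh rₙ)^{1/2} / (s(1+s²)); in particular q_{rₙ}(s) → ∞ as n → ∞. -/

import Mathlib

open Real MeasureTheory Filter

/-!
Write `C = cosh r` and `x = cosh u / C ∈ [0, 1]`. The function `1 - √(1 - x)` has a power series
with nonnegative coefficients, no constant term, and value `1` at `x = 1`; concretely, it is the
increasing limit on `[0, 1]` of the polynomials `P₀ = 0`, `Pₙ₊₁ = (X + Pₙ²) / 2`. Hence an upper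
bound on `∫ cos (s u) * P (cosh u / C)` for all such `P` passes to `1 - √(1 - x)` by dominated
convergence.

When `sin (s r) = 1` and `cos (s r) = 0`, integration by parts gives, for the moments
`Iₖ = ∫₀ʳ cos (s u) coshᵏ u du`, the recursion
`((k + 2)² + s²) Iₖ₊₂ = s Cᵏ⁺² + (k + 2) (k + 1) Iₖ`, from which `Iₖ ≤ s Cᵏ / (1 + s²)` for all
`k ≥ 1` (`moment_le`). The case `k = 2` starts from `I₀ = 1 / s`, which is too large, and uses
`s r ≥ π / 2` to make `C` large enough. Therefore `∫ cos (s u) (1 - √(1 - x)) ≤ s / (1 + s²)`, and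
`∫ cos (s u) √(C - cosh u) ≥ √C (1 / s - s / (1 + s²)) = √C / (s (1 + s²))`.
-/

/-- The two-step recursion for the moments, with the boundary term at `r` simplified by
`sin (s r) = 1` and `cos (s r) = 0`. -/
lemma moment_rec (s r : ℝ) (h1 : Real.sin (s * r) = 1) (h0 : Real.cos (s * r) = 0) (k : ℕ) :
    (((k : ℝ) + 2) ^ 2 + s ^ 2) * ∫ u in (0:ℝ)..r, Real.cos (s * u) * Real.cosh u ^ (k + 2)
      = s * Real.cosh r ^ (k + 2)
        + ((k : ℝ) + 2) * (k + 1) * ∫ u in (0:ℝ)..r, Real.cos (s * u) * Real.cosh u ^ k := by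
  have hd : ∀ u : ℝ, HasDerivAt
      (fun u => Real.cos (s * u) * ((k + 2) * Real.cosh u ^ (k + 1) * Real.sinh u)
        + s * (Real.sin (s * u) * Real.cosh u ^ (k + 2)))
      ((((k : ℝ) + 2) ^ 2 + s ^ 2) * (Real.cos (s * u) * Real.cosh u ^ (k + 2))
        - ((k : ℝ) + 2) * (k + 1) * (Real.cos (s * u) * Real.cosh u ^ k)) u := by
    intro u
    have hl : HasDerivAt (fun u => s * u) s u := by simpa using (hasDerivAt_id u).const_mul s
    have hc := hl.cos
    have hsn := hl.sin
    have hch := Real.hasDerivAt_cosh u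
    have hsh := Real.hasDerivAt_sinh u
    have := (hc.mul (((hch.pow (k + 1)).const_mul ((k : ℝ) + 2)).mul hsh)).add
      ((hsn.mul (hch.pow (k + 2))).const_mul s)
    refine (this.congr_deriv ?_)
    have hq : Real.sinh u ^ 2 = Real.cosh u ^ 2 - 1 := Real.sinh_sq u
    simp only [Nat.add_sub_cancel, Pi.pow_apply, Pi.mul_apply, show k + 2 - 1 = k + 1 from rfl]
    push_cast
    linear_combination (Real.cos (s * u) * ((k : ℝ) + 2) * (k + 1) * Real.cosh u ^ k) * hq
  have key := intervalIntegral.integral_eq_sub_of_hasDerivAt (a := 0) (b := r)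
    (fun u _ => hd u) (Continuous.intervalIntegrable (by fun_prop) _ _)
  rw [intervalIntegral.integral_sub (Continuous.intervalIntegrable (by fun_prop) _ _)
    (Continuous.intervalIntegrable (by fun_prop) _ _), intervalIntegral.integral_const_mul,
    intervalIntegral.integral_const_mul] at key
  simp only [h1, h0, mul_zero, Real.sin_zero, Real.sinh_zero] at key
  linarith

lemma moment_zero (s r : ℝ) (hs : 0 < s) (h1 : Real.sin (s * r) = 1) :
    ∫ u in (0:ℝ)..r, Real.cos (s * u) = 1 / s := by
  rw [intervalIntegral.integral_comp_mul_left (fun x => Real.cos x) hs.ne']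
  simp [h1]

lemma moment_one (s r : ℝ) (h1 : Real.sin (s * r) = 1) (h0 : Real.cos (s * r) = 0) :
    ∫ u in (0:ℝ)..r, Real.cos (s * u) * Real.cosh u = s * Real.cosh r / (1 + s ^ 2) := by
  have hp : (1 + s ^ 2) ≠ 0 := by positivity
  have hd : ∀ u : ℝ, HasDerivAt
      (fun u => (Real.cos (s * u) * Real.sinh u + s * (Real.sin (s * u) * Real.cosh u))
        / (1 + s ^ 2)) (Real.cos (s * u) * Real.cosh u) u := by
    intro u
    have hl : HasDerivAt (fun u => s * u) s u := by simpa using (hasDerivAt_id u).const_mul s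
    have := ((hl.cos.mul (Real.hasDerivAt_sinh u)).add
      ((hl.sin.mul (Real.hasDerivAt_cosh u)).const_mul s)).div_const (1 + s ^ 2)
    refine this.congr_deriv ?_
    field_simp
    ring
  rw [intervalIntegral.integral_eq_sub_of_hasDerivAt (fun u _ => hd u)
    (Continuous.intervalIntegrable (by fun_prop) _ _)]
  simp [h1, h0]

lemma one_add_sq_le_cosh (x : ℝ) : 1 + x ^ 2 / 2 ≤ Real.cosh x := by
  -- The half-angle form `cosh x = 1 + 2 sinh² (x / 2)` reduces this to `|y| ≤ |sinh y|`.
  have h2 : Real.cosh x = 1 + 2 * Real.sinh (x / 2) ^ 2 := by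
    have := Real.cosh_two_mul (x / 2)
    rw [Real.cosh_sq, show 2 * (x / 2) = x by ring] at this
    linarith
  have h3 : (x / 2) ^ 2 ≤ Real.sinh (x / 2) ^ 2 := by
    rcases le_total 0 (x / 2) with h | h
    · have := Real.self_le_sinh_iff.2 h
      nlinarith
    · have := Real.sinh_le_self_iff.2 h
      nlinarith
  nlinarith

/-- The moment bound of degree `2` in `moment_le` is equivalent to exactly this lower bound on `cosh r`. -/
lemma cosh_sq_ge (s r : ℝ) (hr : Real.pi / 2 ≤ s * r) :
    2 * (1 + s ^ 2) ≤ 3 * s ^ 2 * Real.cosh r ^ 2 := by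
  have h := one_add_sq_le_cosh r
  have hpi := Real.pi_gt_three
  have h2 : 1 ≤ (s * r) ^ 2 := by nlinarith
  have h3 : 1 + r ^ 2 ≤ Real.cosh r ^ 2 := by nlinarith [sq_nonneg (r ^ 2)]
  nlinarith [mul_le_mul_of_nonneg_left h3 (sq_nonneg s), sq_nonneg s]

/-- The bound `Iⱼ ≤ s coshʲ r / (1 + s²)` on the moments of positive degree `j = k + 1`, by
two-step induction from `j = 1`, where equality holds, and `j = 2`. -/
lemma moment_le (s r : ℝ) (hs : 0 < s) (hr : Real.pi / 2 ≤ s * r)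
    (h1 : Real.sin (s * r) = 1) (h0 : Real.cos (s * r) = 0) :
    ∀ k : ℕ, ∫ u in (0:ℝ)..r, Real.cos (s * u) * Real.cosh u ^ (k + 1)
      ≤ s / (1 + s ^ 2) * Real.cosh r ^ (k + 1)
  | 0 => by
    simp only [zero_add, pow_one]
    rw [moment_one s r h1 h0]
    exact le_of_eq (by ring)
  | 1 => by
    have hrec := moment_rec s r h1 h0 0
    simp only [pow_zero, mul_one, moment_zero s r hs h1] at hrec
    norm_num at hrec
    have hC := cosh_sq_ge s r hr
    refine le_of_mul_le_mul_left ?_ (show (0 : ℝ) < 2 ^ 2 + s ^ 2 by positivity)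
    norm_num
    rw [hrec, div_mul_eq_mul_div, mul_div_assoc', le_div_iff₀ (by positivity)]
    refine le_of_mul_le_mul_left ?_ hs
    have : s * ((s * Real.cosh r ^ 2 + 2 * s⁻¹) * (1 + s ^ 2))
        = (s ^ 2 * Real.cosh r ^ 2 + 2) * (1 + s ^ 2) := by
      field_simp
    rw [this]
    nlinarith
  | k + 2 => by
    have ih := moment_le s r hs hr h1 h0 k
    have hrec := moment_rec s r h1 h0 (k + 1)
    push_cast at hrec
    have hC := Real.one_le_cosh r
    have hk : (0 : ℝ) ≤ k := k.cast_nonneg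
    refine le_of_mul_le_mul_left ?_ (show (0 : ℝ) < ((k : ℝ) + 1 + 2) ^ 2 + s ^ 2 by positivity)
    rw [show k + 2 + 1 = k + 1 + 2 by ring, hrec]
    have hpow : Real.cosh r ^ (k + 1) ≤ Real.cosh r ^ (k + 1 + 2) :=
      pow_le_pow_right₀ hC (by omega)
    have hA : 0 ≤ s / (1 + s ^ 2) := by positivity
    have ih' := ih.trans (mul_le_mul_of_nonneg_left hpow hA)
    have hs' : s = s / (1 + s ^ 2) * (1 + s ^ 2) := by field_simp
    have h3 := mul_le_mul_of_nonneg_left ih'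
      (show 0 ≤ ((k : ℝ) + 1 + 2) * (k + 1 + 1) by positivity)
    have hB : 0 ≤ s / (1 + s ^ 2) * Real.cosh r ^ (k + 1 + 2) := by positivity
    have h4 : s * Real.cosh r ^ (k + 1 + 2)
        = (1 + s ^ 2) * (s / (1 + s ^ 2) * Real.cosh r ^ (k + 1 + 2)) := by
      field_simp
    rw [h4]
    nlinarith [mul_nonneg hk hB]

/-- Polynomials increasing on `[0, 1]` to `1 - √(1 - x)`, obtained by iterating the fixed-point
equation `y = (x + y²) / 2`. -/
noncomputable def sqrtPoly : ℕ → Polynomial ℝ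
  | 0 => 0
  | n + 1 => Polynomial.C (1 / 2) * (Polynomial.X + sqrtPoly n * sqrtPoly n)

lemma sqrtPoly_eval_succ (n : ℕ) (x : ℝ) :
    (sqrtPoly (n + 1)).eval x = (x + (sqrtPoly n).eval x ^ 2) / 2 := by
  simp [sqrtPoly]
  ring

lemma sqrtPoly_coeff_nonneg (n : ℕ) : ∀ k, 0 ≤ (sqrtPoly n).coeff k := by
  induction n with
  | zero => simp [sqrtPoly]
  | succ n ih =>
    intro k
    rw [sqrtPoly, Polynomial.coeff_C_mul, Polynomial.coeff_add, Polynomial.coeff_X,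
      Polynomial.coeff_mul]
    have : 0 ≤ ∑ p ∈ Finset.HasAntidiagonal.antidiagonal k, (sqrtPoly n).coeff p.1 * (sqrtPoly n).coeff p.2 :=
      Finset.sum_nonneg fun p _ => mul_nonneg (ih _) (ih _)
    split_ifs <;> linarith

lemma sqrtPoly_coeff_zero (n : ℕ) : (sqrtPoly n).coeff 0 = 0 := by
  induction n with
  | zero => simp [sqrtPoly]
  | succ n ih => simp [sqrtPoly, ih]

lemma sqrtPoly_mem (x : ℝ) (hx : 0 ≤ x) (hx1 : x ≤ 1) (n : ℕ) :
    0 ≤ (sqrtPoly n).eval x ∧ (sqrtPoly n).eval x ≤ 1 := by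
  induction n with
  | zero => simp [sqrtPoly]
  | succ n ih =>
    rw [sqrtPoly_eval_succ]
    constructor <;> nlinarith [ih.1, ih.2]

lemma sqrtPoly_tendsto (x : ℝ) (hx : 0 ≤ x) (hx1 : x ≤ 1) :
    Tendsto (fun n => (sqrtPoly n).eval x) atTop (nhds (1 - Real.sqrt (1 - x))) := by
  have hmem := sqrtPoly_mem x hx hx1
  have hmono : Monotone fun n => (sqrtPoly n).eval x := by
    refine monotone_nat_of_le_succ fun n => ?_
    induction n with
    | zero =>
      have := (hmem 1).1
      simpa [sqrtPoly] using this
    | succ n ih =>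
      rw [sqrtPoly_eval_succ (n + 1), sqrtPoly_eval_succ n]
      rw [sqrtPoly_eval_succ n] at ih
      have h1 := (hmem n).1
      nlinarith
  have hlim := tendsto_atTop_ciSup hmono ⟨1, by rintro _ ⟨n, rfl⟩; exact (hmem n).2⟩
  set L := ⨆ n, (sqrtPoly n).eval x with hL
  have hL1 : L ≤ 1 := le_of_tendsto' hlim fun n => (hmem n).2
  have hfix : L = (x + L ^ 2) / 2 := by
    refine tendsto_nhds_unique ((tendsto_add_atTop_iff_nat 1).2 hlim) ?_
    simp only [sqrtPoly_eval_succ]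
    exact ((hlim.pow 2).const_add x).div_const 2
  have : Real.sqrt (1 - x) = 1 - L := by
    rw [show 1 - x = (1 - L) ^ 2 by linarith]
    exact Real.sqrt_sq (by linarith)
  rw [this]
  simpa using hlim

lemma integral_sqrtPoly_le (s r : ℝ) (hs : 0 < s) (hr : Real.pi / 2 ≤ s * r)
    (h1 : Real.sin (s * r) = 1) (h0 : Real.cos (s * r) = 0) (n : ℕ) :
    ∫ u in (0:ℝ)..r, Real.cos (s * u) * (sqrtPoly n).eval (Real.cosh u / Real.cosh r)
      ≤ s / (1 + s ^ 2) := by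
  have hA : 0 ≤ s / (1 + s ^ 2) := by positivity
  have hC := Real.cosh_pos r
  simp only [Polynomial.eval_eq_sum_range, Finset.mul_sum]
  rw [intervalIntegral.integral_finsetSum
    (fun i _ => Continuous.intervalIntegrable (by fun_prop) _ _)]
  calc _ ≤ ∑ i ∈ Finset.range ((sqrtPoly n).natDegree + 1),
        (sqrtPoly n).coeff i * (s / (1 + s ^ 2)) := by
        refine Finset.sum_le_sum fun i _ => ?_
        have he : ∀ u : ℝ,
            Real.cos (s * u) * ((sqrtPoly n).coeff i * (Real.cosh u / Real.cosh r) ^ i)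
            = ((sqrtPoly n).coeff i / Real.cosh r ^ i)
              * (Real.cos (s * u) * Real.cosh u ^ i) := by
          intro u
          rw [div_pow]
          ring
        simp only [he]
        rw [intervalIntegral.integral_const_mul]
        rcases i with _ | k
        · simp [sqrtPoly_coeff_zero]
        · have := mul_le_mul_of_nonneg_left (moment_le s r hs hr h1 h0 k)
            (show 0 ≤ (sqrtPoly n).coeff (k + 1) / Real.cosh r ^ (k + 1) from
              div_nonneg (sqrtPoly_coeff_nonneg n _) (by positivity))
          refine this.trans (le_of_eq ?_)
          field_simp
    _ = (sqrtPoly n).eval 1 * (s / (1 + s ^ 2)) := by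
        rw [← Finset.sum_mul, Polynomial.eval_eq_sum_range]
        simp
    _ ≤ s / (1 + s ^ 2) := by
        have := (sqrtPoly_mem 1 zero_le_one le_rfl n).2
        nlinarith

lemma integral_one_sub_sqrt_le (s r : ℝ) (hs : 0 < s) (hr0 : 0 ≤ r) (hr : Real.pi / 2 ≤ s * r)
    (h1 : Real.sin (s * r) = 1) (h0 : Real.cos (s * r) = 0) :
    ∫ u in (0:ℝ)..r, Real.cos (s * u) * (1 - Real.sqrt (1 - Real.cosh u / Real.cosh r))
      ≤ s / (1 + s ^ 2) := by
  have hx : ∀ u ∈ Set.uIoc 0 r,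
      0 ≤ Real.cosh u / Real.cosh r ∧ Real.cosh u / Real.cosh r ≤ 1 := by
    intro u hu
    rw [Set.uIoc_of_le hr0] at hu
    have hle : Real.cosh u ≤ Real.cosh r := by
      rw [Real.cosh_le_cosh, abs_of_pos hu.1, abs_of_nonneg hr0]
      exact hu.2
    exact ⟨div_nonneg (Real.cosh_pos u).le (Real.cosh_pos r).le,
      (div_le_one (Real.cosh_pos r)).2 hle⟩
  refine le_of_tendsto' (intervalIntegral.tendsto_integral_filter_of_dominated_convergence
    (l := atTop)
    (F := fun n u => Real.cos (s * u) * (sqrtPoly n).eval (Real.cosh u / Real.cosh r))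
    (fun _ => (1 : ℝ)) ?_ ?_ ?_ ?_) (integral_sqrtPoly_le s r hs hr h1 h0)
  · refine Eventually.of_forall fun n => Continuous.aestronglyMeasurable ?_
    have := (sqrtPoly n).continuous
    fun_prop
  · refine Eventually.of_forall fun n => ae_of_all _ fun u hu => ?_
    obtain ⟨ha, hb⟩ := sqrtPoly_mem _ (hx u hu).1 (hx u hu).2 n
    rw [norm_mul, Real.norm_eq_abs, Real.norm_eq_abs, abs_of_nonneg ha]
    exact mul_le_one₀ (Real.abs_cos_le_one _) ha hb
  · exact intervalIntegrable_const
  · exact ae_of_all _ fun u hu => (sqrtPoly_tendsto _ (hx u hu).1 (hx u hu).2).const_mul _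

lemma integral_sqrt_ge (s r : ℝ) (hs : 0 < s) (hr0 : 0 ≤ r) (hr : Real.pi / 2 ≤ s * r)
    (h1 : Real.sin (s * r) = 1) (h0 : Real.cos (s * r) = 0) :
    Real.sqrt (Real.cosh r) / (s * (1 + s ^ 2)) ≤
      ∫ u in (0:ℝ)..r, Real.cos (s * u) * Real.sqrt (Real.cosh r - Real.cosh u) := by
  have hC := Real.cosh_pos r
  have he : ∀ u : ℝ, Real.cos (s * u) * Real.sqrt (Real.cosh r - Real.cosh u)
      = Real.sqrt (Real.cosh r) * (Real.cos (s * u)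
        - Real.cos (s * u) * (1 - Real.sqrt (1 - Real.cosh u / Real.cosh r))) := by
    intro u
    rw [show Real.cosh r - Real.cosh u = Real.cosh r * (1 - Real.cosh u / Real.cosh r) by
      field_simp, Real.sqrt_mul hC.le]
    ring
  simp only [he]
  rw [intervalIntegral.integral_const_mul, intervalIntegral.integral_sub
    (Continuous.intervalIntegrable (by fun_prop) _ _)
    (Continuous.intervalIntegrable (by fun_prop) _ _), moment_zero s r hs h1]
  have hle := integral_one_sub_sqrt_le s r hs hr0 hr h1 h0
  calc _ = Real.sqrt (Real.cosh r) * (1 / s - s / (1 + s ^ 2)) := by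
        field_simp
        ring
    _ ≤ _ := mul_le_mul_of_nonneg_left (by linarith) (Real.sqrt_nonneg _)

theorem stmt_2 (s : ℝ) (hs : 0 < s)
    (q : ℝ → ℝ)
    (hq : ∀ r : ℝ, q r = 4 * Real.sqrt 2 *
      ∫ u in (0:ℝ)..r, Real.cos (s * u) * Real.sqrt (Real.cosh r - Real.cosh u))
    (rn : ℕ → ℝ) (hrn : ∀ n, rn n = Real.pi * (2 * n + 1 / 2) / s) :
    (∀ n, q (rn n) ≥ 4 * Real.sqrt 2 * Real.sqrt (Real.cosh (rn n)) / (s * (1 + s ^ 2))) ∧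
      Tendsto (fun n => q (rn n)) atTop atTop := by
  have hbound : ∀ n,
      q (rn n) ≥ 4 * Real.sqrt 2 * Real.sqrt (Real.cosh (rn n)) / (s * (1 + s ^ 2)) := by
    intro n
    have hsr : s * rn n = Real.pi / 2 + n * (2 * Real.pi) := by
      rw [hrn]
      field_simp
      ring
    have hn : (0 : ℝ) ≤ n := n.cast_nonneg
    have hpi := Real.pi_pos
    have hr0 : 0 ≤ rn n := by
      rw [hrn]
      positivity
    have hr : Real.pi / 2 ≤ s * rn n := by
      rw [hsr]
      have : 0 ≤ n * (2 * Real.pi) := by positivity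
      linarith
    have h1 : Real.sin (s * rn n) = 1 := by
      rw [hsr, Real.sin_add_nat_mul_two_pi, Real.sin_pi_div_two]
    have h0 : Real.cos (s * rn n) = 0 := by
      rw [hsr, Real.cos_add_nat_mul_two_pi, Real.cos_pi_div_two]
    rw [hq, ge_iff_le, mul_div_assoc]
    exact mul_le_mul_of_nonneg_left (integral_sqrt_ge s _ hs hr0 hr h1 h0) (by positivity)
  refine ⟨hbound, tendsto_atTop_mono hbound ?_⟩
  have hr : Tendsto rn atTop atTop := by
    rw [funext hrn]
    refine Tendsto.atTop_div_const hs (Tendsto.const_mul_atTop Real.pi_pos ?_)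
    exact tendsto_atTop_add_const_right _ _
      (tendsto_natCast_atTop_atTop.const_mul_atTop two_pos)
  have hcosh : Tendsto Real.cosh atTop atTop :=
    tendsto_atTop_mono (fun x => show x ≤ Real.cosh x by
      nlinarith [one_add_sq_le_cosh x, sq_nonneg (x - 1)])
      tendsto_id
  exact Tendsto.atTop_div_const (by positivity)
    (Tendsto.const_mul_atTop (by positivity) (Real.tendsto_sqrt_atTop.comp (hcosh.comp hr)))
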